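/- arXiv:1707.02782 — 2 statements merged into one kernel-verified Lean document; each statement's English description precedes it below -/
import Mathlib

section
/- For every integer k ≥ 2, the highest-order face basis function φ_{0k} := ∇ × (N₀ v_{2k}) on the reference tetrahedron is L²-orthogonal to all vector-valued polynomials of degree at most k−2: for every polynomial map q : ℝ³ → ℝ³ whose components have total degree ≤ k−2 one has ∫_{T̂₃} φ_{0k}(x,y,z) · q(x,y,z) d(x,y,z) = 0. -/
open MeasureTheory

/-- Jacobi polynomial with parameters `(α, 0)`, via the Rodrigues formula. -/
noncomputable def jacobiP (α : ℝ) (n : ℕ) (x : ℝ) : ℝ :=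
  1 / (2 ^ n * (n.factorial : ℝ) * (1 - x) ^ α) *
    iteratedDeriv n (fun t : ℝ => (1 - t) ^ α * (t ^ 2 - 1) ^ n) x

/-- Integrated Jacobi polynomial `p̂_n^α`. -/
noncomputable def jacobiPhat (α : ℝ) (n : ℕ) (x : ℝ) : ℝ :=
  if n = 0 then 1 else ∫ ξ in (-1 : ℝ)..x, jacobiP α (n - 1) ξ

/-- Partial derivative in the first coordinate. -/
noncomputable def pdx (f : ℝ × ℝ × ℝ → ℝ) (p : ℝ × ℝ × ℝ) : ℝ :=
  deriv (fun x => f (x, p.2.1, p.2.2)) p.1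

/-- Partial derivative in the second coordinate. -/
noncomputable def pdy (f : ℝ × ℝ × ℝ → ℝ) (p : ℝ × ℝ × ℝ) : ℝ :=
  deriv (fun y => f (p.1, y, p.2.2)) p.2.1

/-- Partial derivative in the third coordinate. -/
noncomputable def pdz (f : ℝ × ℝ × ℝ → ℝ) (p : ℝ × ℝ × ℝ) : ℝ :=
  deriv (fun z => f (p.1, p.2.1, z)) p.2.2

/-- Curl of a vector field on `ℝ³`. -/
noncomputable def curl3 (v : ℝ × ℝ × ℝ → ℝ × ℝ × ℝ) (p : ℝ × ℝ × ℝ) : ℝ × ℝ × ℝ :=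
  (pdy (fun q => (v q).2.2) p - pdz (fun q => (v q).2.1) p,
   pdz (fun q => (v q).1) p - pdx (fun q => (v q).2.2) p,
   pdx (fun q => (v q).2.1) p - pdy (fun q => (v q).1) p)

/-- Euclidean dot product on `ℝ³`. -/
noncomputable def dot3 (a b : ℝ × ℝ × ℝ) : ℝ :=
  a.1 * b.1 + a.2.1 * b.2.1 + a.2.2 * b.2.2

/-- The lowest-order Nédélec field `N₀ = (1/2)(y+z-1, -x, -x)` for the edge from
`(-1,0,0)` to `(1,0,0)`. -/
noncomputable def nedelec0 (p : ℝ × ℝ × ℝ) : ℝ × ℝ × ℝ :=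
  ((p.2.1 + p.2.2 - 1) / 2, -p.1 / 2, -p.1 / 2)

/-- The scalar field `v_{ij}(x,y,z) = p̂_j^{2i-1}((2y+z-1)/(1-z)) (1-z)^j`. -/
noncomputable def vFun (i j : ℕ) (p : ℝ × ℝ × ℝ) : ℝ :=
  jacobiPhat (2 * (i : ℝ) - 1) j ((2 * p.2.1 + p.2.2 - 1) / (1 - p.2.2)) * (1 - p.2.2) ^ j

/-- The face basis function `φ_{0k} = ∇ × (N₀ v_{2k})`. -/
noncomputable def phiFace0 (k : ℕ) (p : ℝ × ℝ × ℝ) : ℝ × ℝ × ℝ :=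
  curl3 (fun q => vFun 2 k q • nedelec0 q) p

/-- The reference tetrahedron, the convex hull of
`(-1,0,0)`, `(1,0,0)`, `(0,1,0)`, `(0,0,1)`. -/
def refTet : Set (ℝ × ℝ × ℝ) :=
  {p | 0 ≤ p.2.2 ∧ p.2.2 ≤ 1 ∧ 0 ≤ p.2.1 ∧ p.2.1 ≤ 1 - p.2.2 ∧ |p.1| ≤ 1 - p.2.1 - p.2.2}


section Helpers
open MeasureTheory Polynomial

theorem L_deriv (G : ℝ[X]) (h1 : G.eval (-1) = 0) (h2 : G.eval 1 = 0) :
    ∫ s in (-1:ℝ)..1, (derivative G).eval s = 0 := by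
  rw [intervalIntegral.integral_eq_sub_of_hasDerivAt (f := fun s => G.eval s)
    (fun s _ => G.hasDerivAt s) ((derivative G).continuous.intervalIntegrable _ _), h1, h2, sub_zero]

theorem poly_ii (G : ℝ[X]) (a b : ℝ) : IntervalIntegrable (fun s => G.eval s) volume a b :=
  G.continuous.intervalIntegrable _ _

theorem L_add (F G : ℝ[X]) : ∫ s in (-1:ℝ)..1, (F + G).eval s =
    (∫ s in (-1:ℝ)..1, F.eval s) + ∫ s in (-1:ℝ)..1, G.eval s := by
  simp only [eval_add]
  exact intervalIntegral.integral_add (poly_ii _ _ _) (poly_ii _ _ _)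

theorem L_C (a : ℝ) (F : ℝ[X]) : ∫ s in (-1:ℝ)..1, (C a * F).eval s =
    a * (∫ s in (-1:ℝ)..1, F.eval s) := by
  simp only [eval_mul, eval_C]
  exact intervalIntegral.integral_const_mul _ _

theorem rod (n : ℕ) : ∀ (U Q : ℝ[X]), (X ^ 2 - 1 : ℝ[X]) ^ n ∣ U → Q.degree < n →
    ∫ s in (-1:ℝ)..1, (derivative^[n] U * Q).eval s = 0 := by
  induction n with
  | zero =>
    intro U Q _ h
    have : Q = 0 := by
      rw [← degree_eq_bot]; simpa [Nat.WithBot.lt_zero_iff] using h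
    simp [this]
  | succ n ih =>
    intro U Q hU hQ
    have hd : (X ^ 2 - 1 : ℝ[X]) ∣ derivative^[n] U := by
      have := pow_sub_dvd_iterate_derivative_of_pow_dvd (p := U) (q := (X ^ 2 - 1 : ℝ[X])) n hU
      simpa using this
    obtain ⟨V, hV⟩ := hd
    have e : derivative^[n+1] U * Q = derivative (derivative^[n] U * Q)
        + C (-1) * (derivative^[n] U * derivative Q) := by
      rw [derivative_mul, Function.iterate_succ_apply']; simp
    rw [e, L_add, L_C, L_deriv, ih U _ ((pow_dvd_pow _ (Nat.le_succ n)).trans hU)]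
    · simp
    · by_cases h0 : Q.natDegree = 0
      · rw [derivative_of_natDegree_zero h0]; simp
      · have hQ0 : Q ≠ 0 := by rintro rfl; simp at h0
        have h1 : Q.natDegree < n + 1 := by
          rwa [← natDegree_lt_iff_degree_lt hQ0] at hQ
        calc (derivative Q).degree ≤ (derivative Q).natDegree := degree_le_natDegree
          _ < n := by
            have := natDegree_derivative_lt h0
            exact_mod_cast (by omega : (derivative Q).natDegree < n)
    · simp [hV]
    · simp [hV]

theorem exists_antideriv (S : ℝ[X]) : ∃ P : ℝ[X], derivative P = S ∧ P.eval (-1) = 0 := by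
  have : ∃ P : ℝ[X], derivative P = S := by
    induction S using Polynomial.induction_on' with
    | add p q hp hq =>
      obtain ⟨a, rfl⟩ := hp
      obtain ⟨b, rfl⟩ := hq
      exact ⟨a + b, by simp⟩
    | monomial n a =>
      refine ⟨monomial (n+1) (a / (n+1)), ?_⟩
      rw [derivative_monomial]
      congr 1
      push_cast
      field_simp
  obtain ⟨P, rfl⟩ := this
  exact ⟨P - C (P.eval (-1)), by simp, by simp⟩

theorem iterD (n : ℕ) : ∀ U : ℝ[X], iteratedDeriv n (fun t => U.eval t) = fun t => (derivative^[n] U).eval t := by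
  induction n with
  | zero => intro U; simp
  | succ n ih =>
    intro U
    rw [iteratedDeriv_succ, ih, Function.iterate_succ_apply']
    ext t; simp

theorem orth_pow {P S : ℝ[X]} {n : ℕ} (hP : derivative P = S) (h1 : P.eval (-1) = 0) (a : ℝ)
    (hS : (1 - X) ^ 3 * S = C a * derivative^[n] ((1 - X) ^ 3 * (X ^ 2 - 1) ^ n)) (m : ℕ) (hm : m < n) :
    ∫ s in (-1:ℝ)..1, ((1 - X) ^ 2 * P * (1 - X) ^ m).eval s = 0 := by
  have e : (1 - X) ^ 2 * P * (1 - X) ^ m = C (-1 / ((m:ℝ) + 3)) * derivative ((1 - X) ^ (m + 3) * P)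
      + C (a / ((m:ℝ) + 3)) * (derivative^[n] ((1 - X) ^ 3 * (X ^ 2 - 1) ^ n) * (1 - X) ^ m) := by
    have h3 : ((m:ℝ) + 3) ≠ 0 := by positivity
    have e1 : C (a / ((m:ℝ) + 3)) = C (1 / ((m:ℝ) + 3)) * C a := by rw [← C_mul]; congr 1; ring
    have e2 : C (-1 / ((m:ℝ) + 3)) = - C (1 / ((m:ℝ) + 3)) := by rw [← C_neg]; congr 1; ring
    have e3 : C (1 / ((m:ℝ) + 3)) * C ((m:ℝ) + 3) = 1 := by
      rw [← C_mul, one_div_mul_cancel h3, C_1]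
    rw [e1, e2, mul_assoc (C _) (C a), ← mul_assoc (C a), ← hS, derivative_mul, hP, derivative_pow]
    simp only [derivative_sub, derivative_one, derivative_X]
    push_cast [Nat.add_sub_cancel]
    linear_combination (-(1 - X) ^ (m+2) * P) * e3
  rw [e, L_add, L_C, L_C, L_deriv, rod]
  · simp
  · exact Dvd.intro_left _ rfl
  · refine lt_of_le_of_lt (degree_pow_le_of_le (p := (1 - X : ℝ[X])) (a := 1) m ?_) ?_
    · compute_degree
    · simpa using hm
  · simp [h1]
  · simp

theorem orth_gen {P : ℝ[X]} {n : ℕ}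
    (h : ∀ m < n, ∫ s in (-1:ℝ)..1, ((1 - X) ^ 2 * P * (1 - X) ^ m).eval s = 0)
    (Q : ℝ[X]) (hQ : Q.natDegree < n) :
    ∫ s in (-1:ℝ)..1, ((1 - X) ^ 2 * P * Q).eval s = 0 := by
  have e : Q = (Q.comp (1 - X)).comp (1 - X) := by
    rw [comp_assoc]; simp
  have hd : (Q.comp (1 - X)).natDegree < n := by
    refine lt_of_le_of_lt natDegree_comp_le ?_
    have : (1 - X : ℝ[X]).natDegree ≤ 1 := by compute_degree
    nlinarith
  generalize Q.comp (1 - X) = R at e hd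
  rw [e, comp, eval₂_eq_sum_range, Finset.mul_sum]
  simp only [eval_finsetSum]
  rw [intervalIntegral.integral_finsetSum (fun i _ => poly_ii _ _ _)]
  refine Finset.sum_eq_zero fun i hi => ?_
  rw [mul_left_comm, L_C, h i (by simp at hi; omega), mul_zero]

theorem jacobi_poly (n : ℕ) : ∃ P : ℝ[X],
    (∀ x, jacobiPhat (2 * ((2:ℕ) : ℝ) - 1) (n+1) x = P.eval x) ∧ P.eval (-1) = 0 ∧
    ∀ Q : ℝ[X], Q.natDegree < n → ∫ s in (-1:ℝ)..1, ((1 - X) ^ 2 * P * Q).eval s = 0 := by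
  have hdvd : (1 - X : ℝ[X]) ^ 3 ∣ derivative^[n] ((1 - X) ^ 3 * (X ^ 2 - 1) ^ n) := by
    have h : (1 - X : ℝ[X]) ^ (3 + n) ∣ (1 - X) ^ 3 * (X ^ 2 - 1) ^ n := by
      rw [pow_add]
      refine mul_dvd_mul_left _ (pow_dvd_pow_of_dvd ⟨-(1 + X), by ring⟩ _)
    simpa using pow_sub_dvd_iterate_derivative_of_pow_dvd n h
  obtain ⟨S, hS⟩ := hdvd
  obtain ⟨P, hP, hP1⟩ := exists_antideriv (C (1 / (2 ^ n * (n.factorial : ℝ))) * S)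
  refine ⟨P, ?_, hP1, orth_gen (orth_pow hP hP1 (1 / (2 ^ n * (n.factorial : ℝ))) (by rw [hS]; ring))⟩
  intro x
  have hal : (2 * ((2:ℕ) : ℝ) - 1) = ((3:ℕ) : ℝ) := by norm_num
  have key : ∀ ξ : ℝ, ξ ≠ 1 → jacobiP (2 * ((2:ℕ) : ℝ) - 1) n ξ = (derivative P).eval ξ := by
    intro ξ hξ
    have hf : (fun t : ℝ => (1 - t) ^ (2 * ((2:ℕ) : ℝ) - 1) * (t ^ 2 - 1) ^ n)
        = fun t => ((1 - X) ^ 3 * (X ^ 2 - 1) ^ n : ℝ[X]).eval t := by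
      ext t
      rw [hal, Real.rpow_natCast]; simp
    rw [jacobiP, hf, iterD, hS, hP, hal, Real.rpow_natCast]
    have : 1 - ξ ≠ 0 := sub_ne_zero.mpr (Ne.symm hξ)
    have h2 : (n.factorial : ℝ) ≠ 0 := by positivity
    simp only [eval_mul, eval_pow, eval_sub, eval_one, eval_X, eval_C]
    field_simp
  rw [jacobiPhat, if_neg (Nat.succ_ne_zero n), Nat.add_sub_cancel]
  have : ∫ ξ in (-1:ℝ)..x, jacobiP (2 * ((2:ℕ) : ℝ) - 1) n ξ = ∫ ξ in (-1:ℝ)..x, (derivative P).eval ξ := by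
    refine intervalIntegral.integral_congr_ae ?_
    filter_upwards [compl_mem_ae_iff.mpr (measure_singleton (1:ℝ))] with ξ hξ _
    exact key ξ (by simpa using hξ)
  rw [this, intervalIntegral.integral_eq_sub_of_hasDerivAt (f := fun s => P.eval s)
    (fun s _ => P.hasDerivAt s) (poly_ii _ _ _), hP1, sub_zero]

theorem final_poly {P : ℝ[X]} {d : ℕ} (hP : P.eval (-1) = 0)
    (h : ∀ Q : ℝ[X], Q.natDegree ≤ d → ∫ s in (-1:ℝ)..1, ((1 - X) ^ 2 * P * Q).eval s = 0)
    (A B D : ℝ[X]) (hA : A.natDegree ≤ d) (hB : B.natDegree ≤ d) (hD : D.natDegree ≤ d) (k a b c : ℝ) :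
    ∫ s in (-1:ℝ)..1, (C a * (((1 - X) * derivative P + C k * P) * (1 - X) ^ 2 * B)
      + (C b * ((C 4 * P - (1 - X) * ((1 + X) * derivative P - C k * P)) * (1 - X) * A)
      + C c * ((C 2 * P - (1 - X) * derivative P) * (1 - X) * D))).eval s = 0 := by
  have hder : ∀ Q : ℝ[X], Q.natDegree ≤ d → (derivative Q).natDegree ≤ d := fun Q hQ =>
    (natDegree_derivative_le Q).trans (by omega)
  have hder2 : ∀ Q R : ℝ[X], Q.natDegree ≤ d → R.natDegree ≤ 1 → (R * derivative Q).natDegree ≤ d := by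
    intro Q R hQ hR
    by_cases h0 : Q.natDegree = 0
    · rw [derivative_of_natDegree_zero h0]; simp
    · have := natDegree_derivative_lt h0
      exact natDegree_mul_le.trans (by omega)
  have x1 : (1 - X : ℝ[X]).natDegree ≤ 1 := by compute_degree
  have x2 : (1 + X : ℝ[X]).natDegree ≤ 1 := by compute_degree
  have c2 : (C 2 : ℝ[X]) = 2 := rfl
  have c3 : (C 3 : ℝ[X]) = 3 := rfl
  have c4 : (C 4 : ℝ[X]) = 4 := rfl
  have e1 : ((1 - X) * derivative P + C k * P) * (1 - X) ^ 2 * B =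
      derivative ((1 - X) ^ 3 * P * B) + (C (3 + k) * ((1 - X) ^ 2 * P * B)
        + C (-1) * ((1 - X) ^ 2 * P * ((1 - X) * derivative B))) := by
    simp only [derivative_mul, derivative_pow, derivative_sub, derivative_one, derivative_X, C_add, C_neg, C_1, c3]
    simp [c3]
    ring
  have e2 : (C 4 * P - (1 - X) * ((1 + X) * derivative P - C k * P)) * (1 - X) * A =
      C (-1) * derivative ((1 - X) ^ 2 * (1 + X) * P * A) + (C (3 + k) * ((1 - X) ^ 2 * P * A)
        + C 1 * ((1 - X) ^ 2 * P * ((1 + X) * derivative A))) := by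
    simp only [derivative_mul, derivative_pow, derivative_sub, derivative_add, derivative_one, derivative_X, C_add, C_neg, C_1, c3, c4]
    simp [c2]
    ring
  have e3 : (C 2 * P - (1 - X) * derivative P) * (1 - X) * D =
      C (-1) * derivative ((1 - X) ^ 2 * P * D) + C 1 * ((1 - X) ^ 2 * P * derivative D) := by
    simp only [derivative_mul, derivative_pow, derivative_sub, derivative_one, derivative_X, C_neg, C_1]
    simp [c2]
    ring
  rw [e1, e2, e3]
  simp only [L_add, L_C]
  rw [L_deriv _ (by simp [hP]) (by simp), L_deriv _ (by simp [hP]) (by simp), L_deriv _ (by simp [hP]) (by simp),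
    h B hB, h A hA, h _ (hder2 B _ hB x1), h _ (hder2 A _ hA x2), h _ (hder D hD)]
  simp

/-- integration in `x` of a polynomial over `[-w, w]` -/
theorem xint (q : MvPolynomial (Fin 3) ℝ) (d : ℕ) (hq : q.totalDegree ≤ d) (c z : ℝ) :
    (∃ A : ℝ[X], A.natDegree ≤ d ∧ ∀ s : ℝ,
      ∫ x in (-(c / 2 * (1 - s)))..(c / 2 * (1 - s)), MvPolynomial.eval ![x, c / 2 * s + c / 2, z] q
        = (1 - s) * A.eval s) ∧
    (∃ B : ℝ[X], B.natDegree ≤ d ∧ ∀ s : ℝ,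
      ∫ x in (-(c / 2 * (1 - s)))..(c / 2 * (1 - s)), x * MvPolynomial.eval ![x, c / 2 * s + c / 2, z] q
        = (1 - s) ^ 2 * B.eval s) := by
  have hdeg : ∀ m ∈ q.support, m 0 + m 1 ≤ d := by
    intro m hm
    have h1 := (MvPolynomial.le_totalDegree hm).trans hq
    rw [Finsupp.sum_fintype _ _ (fun _ => rfl), Fin.sum_univ_three] at h1
    omega
  have x1 : (1 - X : ℝ[X]).natDegree ≤ 1 := by compute_degree
  have x2 : (1 + X : ℝ[X]).natDegree ≤ 1 := by compute_degree
  have hd2 : ∀ (f : (Fin 3 →₀ ℕ) → ℝ), (∑ m ∈ q.support, C (f m) * ((1 - X) ^ m 0 * (1 + X) ^ m 1) : ℝ[X]).natDegree ≤ d := by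
    intro f
    refine natDegree_sum_le_of_forall_le _ _ fun m hm => ?_
    refine (natDegree_C_mul_le _ _).trans (natDegree_mul_le.trans ?_)
    have a1 := natDegree_pow_le_of_le (m 0) x1
    have a2 := natDegree_pow_le_of_le (m 1) x2
    have := hdeg m hm
    omega
  constructor
  · refine ⟨_, hd2 (fun m => q.coeff m * (c / 2) ^ (m 1) * z ^ (m 2) * (c / 2) ^ (m 0 + 1) * (1 - (-1) ^ (m 0 + 1)) / (m 0 + 1)), ?_⟩
    intro s
    simp only [MvPolynomial.eval_eq', Fin.prod_univ_three, eval_finsetSum, Finset.mul_sum]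
    rw [intervalIntegral.integral_finsetSum]
    · refine Finset.sum_congr rfl fun m _ => ?_
      simp only [Matrix.cons_val_zero, Matrix.cons_val_one, Matrix.cons_val]
      have : ∀ x : ℝ, q.coeff m * (x ^ m 0 * (c / 2 * s + c / 2) ^ m 1 * z ^ m 2)
        = (q.coeff m * ((c / 2) ^ m 1 * (1 + s) ^ m 1) * z ^ m 2) * x ^ m 0 := by
        intro x; rw [← mul_pow]; ring
      simp only [this]
      rw [intervalIntegral.integral_const_mul, integral_pow, neg_pow (c / 2 * (1 - s)), mul_pow]
      simp
      ring
    · intro m _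
      apply Continuous.intervalIntegrable
      simp only [Matrix.cons_val_zero, Matrix.cons_val_one, Matrix.cons_val]
      fun_prop
  · refine ⟨_, hd2 (fun m => q.coeff m * (c / 2) ^ (m 1) * z ^ (m 2) * (c / 2) ^ (m 0 + 2) * (1 - (-1) ^ (m 0 + 2)) / (m 0 + 2)), ?_⟩
    intro s
    simp only [MvPolynomial.eval_eq', Fin.prod_univ_three, eval_finsetSum, Finset.mul_sum]
    rw [intervalIntegral.integral_finsetSum]
    · refine Finset.sum_congr rfl fun m _ => ?_
      simp only [Matrix.cons_val_zero, Matrix.cons_val_one, Matrix.cons_val]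
      have : ∀ x : ℝ, x * (q.coeff m * (x ^ m 0 * (c / 2 * s + c / 2) ^ m 1 * z ^ m 2))
        = (q.coeff m * ((c / 2) ^ m 1 * (1 + s) ^ m 1) * z ^ m 2) * x ^ (m 0 + 1) := by
        intro x; rw [← mul_pow]; ring
      simp only [this]
      rw [intervalIntegral.integral_const_mul, integral_pow, neg_pow (c / 2 * (1 - s)), mul_pow]
      simp
      ring
    · intro m _
      apply Continuous.intervalIntegrable
      simp only [Matrix.cons_val_zero, Matrix.cons_val_one, Matrix.cons_val]
      fun_prop

/-- explicit form of the face function -/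
theorem phi_explicit {k : ℕ} {P : ℝ[X]}
    (hP : ∀ x, jacobiPhat (2 * ((2:ℕ) : ℝ) - 1) (k + 1) x = P.eval x) (x s z : ℝ) (hz : z < 1) :
    phiFace0 (k + 1) (x, (1 - z) / 2 * s + (1 - z) / 2, z) =
      (-(1 - z) ^ k / 2 * x * ((1 - s) * (derivative P).eval s + (k + 1) * P.eval s),
       (1 - z) ^ (k + 1) / 4 * (4 * P.eval s - (1 - s) * ((1 + s) * (derivative P).eval s - (k + 1) * P.eval s)),
       -(1 - z) ^ (k + 1) / 2 * (2 * P.eval s - (1 - s) * (derivative P).eval s)) := by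
  have hc : (1 - z) ≠ 0 := by linarith
  set y := (1 - z) / 2 * s + (1 - z) / 2 with hy
  have hs : (2 * y + z - 1) / (1 - z) = s := by rw [hy]; field_simp; ring
  have hv : ∀ p, vFun 2 (k + 1) p = P.eval ((2 * p.2.1 + p.2.2 - 1) / (1 - p.2.2)) * (1 - p.2.2) ^ (k+1) := by
    intro p; rw [vFun, hP]
  have hvy : HasDerivAt (fun t => P.eval ((2 * t + z - 1) / (1 - z)) * (1 - z) ^ (k + 1))
      (2 * (1 - z) ^ k * (derivative P).eval s) y := by
    have h1 : HasDerivAt (fun t : ℝ => (2 * t + z - 1) / (1 - z)) (2 / (1 - z)) y := by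
      simpa using ((((hasDerivAt_id y).const_mul 2).add_const z).sub_const 1).div_const (1 - z)
    have h2 := ((P.hasDerivAt _).comp y h1).mul_const ((1 - z) ^ (k + 1))
    rw [hs] at h2
    refine h2.congr_deriv ?_
    rw [pow_succ]; field_simp
  have hvz : HasDerivAt (fun t => P.eval ((2 * y + t - 1) / (1 - t)) * (1 - t) ^ (k + 1))
      ((1 - z) ^ k * ((1 + s) * (derivative P).eval s - (k + 1) * P.eval s)) z := by
    have h0 : HasDerivAt (fun t : ℝ => 1 - t) (-1) z := by
      simpa using (hasDerivAt_id z).const_sub 1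
    have h1 := (((hasDerivAt_id z).const_add (2 * y)).sub_const 1).div h0 hc
    have h2 := ((P.hasDerivAt _).comp z h1).mul (h0.pow (k + 1))
    simp only [id, Function.comp_def, Pi.div_apply, Pi.pow_apply] at h2
    rw [hs] at h2
    refine h2.congr_deriv ?_
    have e : 2 * y + z - 1 = (1 - z) * s := by rw [hy]; ring
    rw [e, pow_succ]
    push_cast [Nat.add_sub_cancel]
    field_simp
    ring
  have hv0 : P.eval ((2 * y + z - 1) / (1 - z)) = P.eval s := by rw [hs]
  have hxx : HasDerivAt (fun t : ℝ => -t / 2) (-1 / 2) x := ((hasDerivAt_id x).neg).div_const 2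
  have hay : HasDerivAt (fun t : ℝ => (t + z - 1) / 2) (1 / 2) y :=
    (((hasDerivAt_id y).add_const z).sub_const 1).div_const 2
  have haz : HasDerivAt (fun t : ℝ => (y + t - 1) / 2) (1 / 2) z :=
    (((hasDerivAt_id z).const_add y).sub_const 1).div_const 2
  simp only [phiFace0, curl3, pdx, pdy, pdz, nedelec0, Prod.smul_fst, Prod.smul_snd, smul_eq_mul, hv]
  have d1 := (hvy.mul_const (-x / 2)).deriv
  have d2 := (hvz.mul_const (-x / 2)).deriv
  have d3 := (hvz.mul haz).deriv
  have d4 := (hxx.const_mul (P.eval ((2 * y + z - 1) / (1 - z)) * (1 - z) ^ (k + 1))).deriv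
  have d5 := (hvy.mul hay).deriv
  simp only [Pi.mul_def] at d3 d5
  rw [d1, d2, d3, d4, d5, hs]
  have hw : y + z - 1 = - ((1 - z) * (1 - s) / 2) := by rw [hy]; ring
  rw [hw]
  refine Prod.ext ?_ (Prod.ext ?_ ?_) <;> simp only [pow_succ] <;> ring

end Helpers

section Slices

theorem slice_zero {f : ℝ × ℝ × ℝ → ℝ} (z : ℝ) (hz : z < 1)
    (h : ∫ s in (-1:ℝ)..1, ∫ x in (-((1 - z) / 2 * (1 - s)))..((1 - z) / 2 * (1 - s)),
      f (x, (1 - z) / 2 * s + (1 - z) / 2, z) = 0) :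
    ∫ y, ∫ x, refTet.indicator f (x, y, z) = 0 := by
  by_cases hz0 : 0 ≤ z
  swap
  · have : ∀ x y, refTet.indicator f (x, y, z) = 0 := fun x y =>
      Set.indicator_of_notMem (fun hm => hz0 hm.1) _
    simp [this]
  have hin : ∀ y, ∫ x, refTet.indicator f (x, y, z) =
      (Set.Icc 0 (1 - z)).indicator (fun y => ∫ x in (-(1 - z - y))..(1 - z - y), f (x, y, z)) y := by
    intro y
    by_cases hy : y ∈ Set.Icc 0 (1 - z)
    · rw [Set.indicator_of_mem hy]
      have e : (fun x => refTet.indicator f (x, y, z)) =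
          (Set.Icc (-(1 - z - y)) (1 - z - y)).indicator (fun x => f (x, y, z)) := by
        ext x
        by_cases hx : x ∈ Set.Icc (-(1 - z - y)) (1 - z - y)
        · rw [Set.indicator_of_mem hx, Set.indicator_of_mem]
          refine ⟨hz0, hz.le, hy.1, hy.2, ?_⟩
          have : |x| ≤ 1 - z - y := abs_le.mpr hx
          change |x| ≤ 1 - y - z
          linarith
        · rw [Set.indicator_of_notMem hx, Set.indicator_of_notMem]
          intro hm
          have h5 : |x| ≤ 1 - y - z := hm.2.2.2.2
          exact hx (abs_le.mp (by linarith))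
      rw [e, integral_indicator measurableSet_Icc, integral_Icc_eq_integral_Ioc,
        intervalIntegral.integral_of_le (by have := hy.2; linarith)]
    · rw [Set.indicator_of_notMem hy]
      have : ∀ x, refTet.indicator f (x, y, z) = 0 := fun x =>
        Set.indicator_of_notMem (fun hm => hy ⟨hm.2.2.1, hm.2.2.2.1⟩) _
      simp [this]
  simp only [hin]
  rw [integral_indicator measurableSet_Icc, integral_Icc_eq_integral_Ioc,
    ← intervalIntegral.integral_of_le (by linarith)]
  have hc : (1 - z) / 2 ≠ 0 := by intro h; linarith
  have hch := intervalIntegral.integral_comp_mul_add (a := -1) (b := 1)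
    (fun y => ∫ x in (-(1 - z - y))..(1 - z - y), f (x, y, z)) hc ((1 - z) / 2)
  have a1 : (1 - z) / 2 * (-1) + (1 - z) / 2 = 0 := by ring
  have a2 : (1 - z) / 2 * 1 + (1 - z) / 2 = 1 - z := by ring
  have a3 : ∀ s : ℝ, 1 - z - ((1 - z) / 2 * s + (1 - z) / 2) = (1 - z) / 2 * (1 - s) := by
    intro s; ring
  simp only [a1, a2, a3] at hch
  rw [h] at hch
  have := hch.symm
  rw [smul_eq_mul, mul_eq_zero] at this
  exact this.resolve_left (inv_ne_zero hc)

theorem tet_zero {f : ℝ × ℝ × ℝ → ℝ}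
    (h : ∀ z < 1, ∫ s in (-1:ℝ)..1, ∫ x in (-((1 - z) / 2 * (1 - s)))..((1 - z) / 2 * (1 - s)),
      f (x, (1 - z) / 2 * s + (1 - z) / 2, z) = 0) :
    ∫ p in refTet, f p = 0 := by
  have hm : MeasurableSet refTet := by
    refine IsClosed.measurableSet ?_
    simp only [refTet, Set.ofPred_and]
    refine IsClosed.inter ?_ (IsClosed.inter ?_ (IsClosed.inter ?_ (IsClosed.inter ?_ ?_))) <;>
    exact isClosed_le (by fun_prop) (by fun_prop)
  rw [← integral_indicator hm]
  by_cases hi : Integrable (refTet.indicator f) volume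
  swap
  · exact integral_undef hi
  rw [Measure.volume_eq_prod] at hi ⊢
  rw [integral_prod_symm _ hi]
  have hi2 := hi.integral_prod_right
  rw [Measure.volume_eq_prod] at hi2 ⊢
  rw [integral_prod_symm _ hi2]
  refine integral_eq_zero_of_ae ?_
  filter_upwards [compl_mem_ae_iff.mpr (measure_singleton (1:ℝ))] with z hz
  rcases lt_or_gt_of_ne (show z ≠ 1 by simpa using hz) with h1 | h1
  · exact slice_zero z h1 (h z h1)
  · have : ∀ x y, refTet.indicator f (x, y, z) = 0 := fun x y =>
      Set.indicator_of_notMem (fun hm => absurd hm.2.1 (not_le.mpr h1)) _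
    simp [this]

end Slices

/-- The highest-order face basis function `φ_{0k}` is `L²(T̂₃)`-orthogonal to all
vector-valued polynomials of total degree at most `k - 2`. -/
theorem phiFace0_orthogonal_to_low_order (k : ℕ) (hk : 2 ≤ k)
    (q₁ q₂ q₃ : MvPolynomial (Fin 3) ℝ)
    (h₁ : q₁.totalDegree ≤ k - 2) (h₂ : q₂.totalDegree ≤ k - 2)
    (h₃ : q₃.totalDegree ≤ k - 2) :
    ∫ p in refTet,
        dot3 (phiFace0 k p)
          (MvPolynomial.eval ![p.1, p.2.1, p.2.2] q₁,
           MvPolynomial.eval ![p.1, p.2.1, p.2.2] q₂,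
           MvPolynomial.eval ![p.1, p.2.1, p.2.2] q₃) = 0 := by
  obtain ⟨n, rfl⟩ : ∃ n, k = n + 1 := ⟨k - 1, by omega⟩
  obtain ⟨P, hP, hP1, horth⟩ := jacobi_poly n
  refine tet_zero fun z hz => ?_
  obtain ⟨-, B, hB, hBs⟩ := xint q₁ _ h₁ (1 - z) z
  obtain ⟨⟨A, hA, hAs⟩, -⟩ := xint q₂ _ h₂ (1 - z) z
  obtain ⟨⟨D, hD, hDs⟩, -⟩ := xint q₃ _ h₃ (1 - z) z
  have hfin := final_poly hP1 (d := n + 1 - 2) (fun Q hQ => horth Q (by omega)) A B D hA hB hD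
    (n + 1) (-(1 - z) ^ n / 2) ((1 - z) ^ (n + 1) / 4) (-(1 - z) ^ (n + 1) / 2)
  rw [← hfin]
  refine intervalIntegral.integral_congr fun s _ => ?_
  simp only [phi_explicit hP _ _ _ hz, dot3]
  have hcont : ∀ q : MvPolynomial (Fin 3) ℝ, Continuous fun x : ℝ =>
      MvPolynomial.eval ![x, (1 - z) / 2 * s + (1 - z) / 2, z] q := by
    intro q
    refine (MvPolynomial.continuous_eval q).comp ?_
    refine continuous_pi fun i => ?_
    fin_cases i
    · exact continuous_id
    · exact continuous_const
    · exact continuous_const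
  have c1 := hcont q₁
  have c2 := hcont q₂
  have c3 := hcont q₃
  have e : ∀ a b x t : ℝ, a * x * b * t = a * b * (x * t) := by intros; ring
  simp only [fun x : ℝ => e (-(1 - z) ^ n / 2) ((1 - s) * Polynomial.eval s (Polynomial.derivative P) +
    ((n : ℝ) + 1) * Polynomial.eval s P) x]
  rw [intervalIntegral.integral_add, intervalIntegral.integral_add,
    intervalIntegral.integral_const_mul, intervalIntegral.integral_const_mul,
    intervalIntegral.integral_const_mul, hBs, hAs, hDs]
  · simp only [Polynomial.eval_add, Polynomial.eval_mul, Polynomial.eval_sub, Polynomial.eval_C,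
      Polynomial.eval_X, Polynomial.eval_one, Polynomial.eval_pow]
    ring
  all_goals
    apply Continuous.intervalIntegrable
    fun_prop
end

section
/- The normal-trace functions up to total order k span the full polynomial space of degree k on the triangle F: for every integer k ≥ 1, the linear span (as functions on F) of the constant function 1, the functions h_j(y) := p̂_j^3(2y−1) − (1−y) p_{j−1}^3(2y−1) for 1 ≤ j ≤ k, and the functions g_{ij}(x,y) := p_i^0(x/(1−y)) (1−y)^i p_j^{2i+1}(2y−1) for i ≥ 1, j ≥ 0, i + j ≤ k, equals the space of restrictions to F of all real polynomials in two variables of total degree at most k. -/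
open MeasureTheory

/-- The triangle `F = {(x,y) : 0 ≤ y ≤ 1, |x| ≤ 1 - y}`. -/
def faceTri : Set (ℝ × ℝ) := {p | 0 ≤ p.2 ∧ p.2 ≤ 1 ∧ |p.1| ≤ 1 - p.2}

/-- Restriction of a function on `ℝ²` to the triangle `F`. -/
def restr (f : ℝ × ℝ → ℝ) : faceTri → ℝ := fun p => f p.val

/-- The normal-trace function `g_{ij}(x,y) = p_i^0(x/(1-y)) (1-y)^i p_j^{2i+1}(2y-1)`. -/
noncomputable def gFun (i j : ℕ) (p : ℝ × ℝ) : ℝ :=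
  jacobiP 0 i (p.1 / (1 - p.2)) * (1 - p.2) ^ i
    * jacobiP (2 * (i : ℝ) + 1) j (2 * p.2 - 1)

/-- The normal-trace function `h_j(y) = p̂_j^3(2y-1) - (1-y) p_{j-1}^3(2y-1)`. -/
noncomputable def hFun (j : ℕ) (y : ℝ) : ℝ :=
  jacobiPhat 3 j (2 * y - 1) - (1 - y) * jacobiP 3 (j - 1) (2 * y - 1)

/-- The set of normal-trace functions up to total order `k`, restricted to `F`:
the constant `1`, the `h_j` for `1 ≤ j ≤ k`, and the `g_{ij}` for `i ≥ 1`, `i + j ≤ k`. -/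
noncomputable def traceFamily (k : ℕ) : Set (faceTri → ℝ) :=
  {restr fun _ => 1}
    ∪ {f | ∃ j : ℕ, 1 ≤ j ∧ j ≤ k ∧ f = restr fun p => hFun j p.2}
    ∪ {f | ∃ i j : ℕ, 1 ≤ i ∧ i + j ≤ k ∧ f = restr (gFun i j)}

/-- Restrictions to `F` of all real polynomials in two variables of total degree
at most `k`. -/
def polyRestrictions (k : ℕ) : Set (faceTri → ℝ) :=
  {f | ∃ q : MvPolynomial (Fin 2) ℝ, q.totalDegree ≤ k ∧
    f = restr fun p => MvPolynomial.eval ![p.1, p.2] q}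


open Polynomial in
lemma jac_poly (a n : ℕ) : ∃ Q : ℝ[X], Q ≠ 0 ∧ Q.natDegree = n ∧
    ∀ x : ℝ, (x ≠ 1 ∨ a = 0) → jacobiP (a : ℝ) n x = Q.eval x := by
  set W : ℝ[X] := (1 - X) ^ a * (X ^ 2 - 1) ^ n with hW
  have e1 : (1 - X : ℝ[X]) = - (X - C 1) := by simp
  have hd1 : (1 - X : ℝ[X]).natDegree = 1 := by rw [e1, natDegree_neg, natDegree_X_sub_C]
  have hne1 : (1 - X : ℝ[X]) ≠ 0 := by
    intro h; rw [h] at hd1; simp at hd1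
  have hd2 : (X ^ 2 - 1 : ℝ[X]).natDegree = 2 := by
    have := natDegree_X_pow_sub_C (R := ℝ) (n := 2) (r := 1)
    simpa using this
  have hne2 : (X ^ 2 - 1 : ℝ[X]) ≠ 0 := by
    intro h; rw [h] at hd2; simp at hd2
  have hWd : W.natDegree = a + 2 * n := by
    rw [hW, natDegree_mul (pow_ne_zero _ hne1) (pow_ne_zero _ hne2), natDegree_pow, natDegree_pow,
      hd1, hd2]; ring
  have hW0 : W ≠ 0 := mul_ne_zero (pow_ne_zero _ hne1) (pow_ne_zero _ hne2)
  have hDc : ((derivative^[n]) W).coeff (a + n) ≠ 0 := by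
    rw [coeff_iterate_derivative]
    have h1 : W.coeff (a + n + n) ≠ 0 := by
      have : a + n + n = W.natDegree := by omega
      rw [this]; exact leadingCoeff_ne_zero.mpr hW0
    rw [nsmul_eq_mul]
    refine mul_ne_zero ?_ h1
    have : 0 < (a + n + n).descFactorial n := Nat.pos_of_ne_zero (by
      rw [Ne, Nat.descFactorial_eq_zero_iff_lt]; omega)
    exact_mod_cast this.ne'
  have hDd : ((derivative^[n]) W).natDegree = a + n := by
    apply le_antisymm
    · have := natDegree_iterate_derivative W n
      omega
    · exact le_natDegree_of_ne_zero hDc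
  have hdvd : (1 - X : ℝ[X]) ^ a ∣ (derivative^[n]) W := by
    have h2 : (1 - X : ℝ[X]) ^ (a + n) ∣ W := by
      refine ⟨(-1) ^ n * (X + 1) ^ n, ?_⟩
      rw [hW, pow_add, mul_assoc, ← mul_pow, ← mul_pow]
      congr 2; ring
    have := pow_sub_dvd_iterate_derivative_of_pow_dvd n h2
    simpa using this
  obtain ⟨Q, hQ⟩ := hdvd
  have hD0 : (derivative^[n]) W ≠ 0 := by
    intro h; rw [h] at hDc; simp at hDc
  have hQ0 : Q ≠ 0 := by
    rintro rfl; simp at hQ; exact hD0 hQ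
  have hQd : Q.natDegree = n := by
    have := congrArg natDegree hQ
    rw [hDd, natDegree_mul (pow_ne_zero _ hne1) hQ0, natDegree_pow, hd1] at this
    omega
  set c : ℝ := 1 / (2 ^ n * (n.factorial : ℝ)) with hc
  have hc0 : c ≠ 0 := by positivity
  refine ⟨C c * Q, mul_ne_zero (by simpa using hc0) hQ0, ?_, ?_⟩
  · rw [natDegree_C_mul hc0, hQd]
  · intro x hx
    have hf : (fun t : ℝ => (1 - t) ^ (a : ℝ) * (t ^ 2 - 1) ^ n) = fun t => W.eval t := by
      funext t; simp [hW]
    have hit : iteratedDeriv n (fun t => W.eval t) x = ((derivative^[n]) W).eval x := by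
      have hg : ∀ (m : ℕ) (P : ℝ[X]), iteratedDeriv m (fun t => P.eval t)
          = fun t => ((derivative^[m]) P).eval t := by
        intro m
        induction m with
        | zero => intro P; simp
        | succ m ih =>
          intro P
          rw [iteratedDeriv_succ', Function.iterate_succ_apply, ← ih (derivative P)]
          congr 1
          funext t
          exact P.deriv
      rw [hg]
    have hx' : (1 - x) ^ a ≠ 0 := by
      rcases hx with h | h
      · exact pow_ne_zero _ (sub_ne_zero.mpr h.symm)
      · simp [h]
    rw [jacobiP, hf, hit, hQ, Real.rpow_natCast]
    simp only [eval_mul, eval_pow, eval_sub, eval_one, eval_X, eval_C, hc]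
    field_simp

open Polynomial in
lemma exists_antideriv_s13 (Q : ℝ[X]) : ∃ R : ℝ[X], derivative R = Q := by
  induction Q using Polynomial.induction_on' with
  | add p q hp hq =>
    obtain ⟨R, rfl⟩ := hp
    obtain ⟨S, rfl⟩ := hq
    exact ⟨R + S, by simp⟩
  | monomial n a =>
    refine ⟨monomial (n + 1) (a / (n + 1)), ?_⟩
    rw [derivative_monomial]
    have : (n : ℝ) + 1 ≠ 0 := by positivity
    simp only [Nat.add_sub_cancel, Nat.cast_add, Nat.cast_one]
    rw [div_mul_cancel₀ _ this]

open Polynomial in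
lemma comp_aff (Q : ℝ[X]) (h0 : Q ≠ 0) : Q.comp (C 2 * X + C (-1)) ≠ 0 ∧
    (Q.comp (C 2 * X + C (-1))).natDegree = Q.natDegree := by
  have hd : (C 2 * X + C (-1) : ℝ[X]).natDegree = 1 := natDegree_linear (by norm_num)
  have h2 : (Q.comp (C 2 * X + C (-1))).natDegree = Q.natDegree := by
    rw [natDegree_comp, hd, mul_one]
  refine ⟨?_, h2⟩
  intro h
  rw [comp_eq_zero_iff] at h
  rcases h with h | h
  · exact h0 h
  · have := congrArg natDegree h.2
    rw [hd] at this; simp at this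

open Polynomial in
lemma h_poly (j : ℕ) (hj : 1 ≤ j) : ∃ H : ℝ[X], H ≠ 0 ∧ H.natDegree = j ∧
    ∀ y : ℝ, y ≤ 1 → hFun j y = H.eval y := by
  obtain ⟨n, rfl⟩ : ∃ n, j = n + 1 := ⟨j - 1, by omega⟩
  obtain ⟨Q, hQ0, hQd, hQ⟩ := jac_poly 3 n
  obtain ⟨R, hR⟩ := exists_antideriv_s13 Q
  have hcR : ∀ m, Q.coeff m = R.coeff (m + 1) * (m + 1) := by
    intro m; rw [← hR, coeff_derivative]
  set T : ℝ[X] := R - C (R.eval (-1)) - C (1/2) * ((1 - X) * Q) with hT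
  have hlead : Q.coeff n ≠ 0 := by
    rw [← hQd]; exact leadingCoeff_ne_zero.mpr hQ0
  have hTc : ∀ m, T.coeff (m + 1) = Q.coeff m / (m + 1) - 1/2 * (Q.coeff (m + 1) - Q.coeff m) := by
    intro m
    have h1 : (m : ℝ) + 1 ≠ 0 := by positivity
    rw [hT, coeff_sub, coeff_sub, coeff_C_mul, sub_mul, one_mul, coeff_sub, coeff_X_mul,
      coeff_C_succ, hcR m, mul_div_cancel_right₀ _ h1]
    ring
  have hTn : T.coeff (n + 1) ≠ 0 := by
    rw [hTc, coeff_eq_zero_of_natDegree_lt (by omega : Q.natDegree < n + 1)]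
    have : Q.coeff n / (n + 1) - 1/2 * (0 - Q.coeff n) = Q.coeff n * (1 / (n + 1) + 1/2) := by ring
    rw [this]
    exact mul_ne_zero hlead (by positivity)
  have hT0 : T ≠ 0 := by intro h; rw [h] at hTn; simp at hTn
  have hTd : T.natDegree = n + 1 := by
    apply le_antisymm
    · rw [natDegree_le_iff_coeff_eq_zero]
      intro N hN
      obtain ⟨m, rfl⟩ : ∃ m, N = m + 1 := ⟨N - 1, by omega⟩
      rw [hTc, coeff_eq_zero_of_natDegree_lt (by omega : Q.natDegree < m + 1),
        coeff_eq_zero_of_natDegree_lt (by omega : Q.natDegree < m)]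
      simp
    · exact le_natDegree_of_ne_zero hTn
  obtain ⟨k1, k2⟩ := comp_aff T hT0
  refine ⟨_, k1, k2.trans hTd, ?_⟩
  intro y hy
  have hphat : jacobiPhat 3 (n + 1) (2 * y - 1) = R.eval (2 * y - 1) - R.eval (-1) := by
    rw [jacobiPhat, if_neg (by omega)]
    have : ∫ ξ in (-1 : ℝ)..(2 * y - 1), jacobiP 3 (n + 1 - 1) ξ
        = ∫ ξ in (-1 : ℝ)..(2 * y - 1), Q.eval ξ := by
      apply intervalIntegral.integral_congr_ae
      have : ∀ᵐ ξ : ℝ, ξ ≠ 1 := by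
        rw [ae_iff]; simp
      filter_upwards [this] with ξ hξ _
      have := hQ ξ (Or.inl hξ)
      simpa using this
    rw [this]
    apply intervalIntegral.integral_eq_sub_of_hasDerivAt (f := fun t => R.eval t)
      (f' := fun t => Q.eval t)
    · intro x _
      rw [← hR]; exact R.hasDerivAt x
    · exact Q.continuous.intervalIntegrable _ _
  have hprod : (1 - y) * jacobiP 3 n (2 * y - 1) = (1 - y) * Q.eval (2 * y - 1) := by
    by_cases h : y = 1
    · simp [h]
    · have := hQ (2 * y - 1) (Or.inl (by intro h'; apply h; linarith))
      rw [← this]; norm_num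
  rw [hFun, hphat, Nat.add_sub_cancel, hprod, hT]
  simp only [eval_comp, eval_sub, eval_mul, eval_add, eval_C, eval_X, eval_one]
  have : 2 * y + -1 = 2 * y - 1 := by ring
  rw [this]; ring

open Polynomial in
lemma span_deg (S : Submodule ℝ ℝ[X]) (m : ℕ)
    (h : ∀ j ≤ m, ∃ P ∈ S, P ≠ 0 ∧ P.natDegree = j) :
    ∀ p : ℝ[X], p.natDegree ≤ m → p ∈ S := by
  have key : ∀ d, d ≤ m + 1 → ∀ p : ℝ[X], p.degree < d → p ∈ S := by
    intro d
    induction d with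
    | zero =>
      intro _ p hp
      have : p = 0 := by
        rw [← degree_eq_bot]
        simpa using hp
      rw [this]; exact S.zero_mem
    | succ d ih =>
      intro hd p hp
      obtain ⟨P, hPS, hP0, hPd⟩ := h d (by omega)
      have hl : P.coeff d ≠ 0 := by rw [← hPd]; exact leadingCoeff_ne_zero.mpr hP0
      have : p - (p.coeff d / P.coeff d) • P ∈ S := by
        apply ih (by omega)
        rw [degree_lt_iff_coeff_zero]
        intro N hN
        rw [coeff_sub, coeff_smul, smul_eq_mul]
        rcases hN.eq_or_lt with rfl | hN
        · field_simp; simp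
        · rw [coeff_eq_zero_of_natDegree_lt (by omega : P.natDegree < N),
            (degree_lt_iff_coeff_zero _ _).mp hp N (by exact_mod_cast hN)]
          simp
      have h2 := S.add_mem this (S.smul_mem (p.coeff d / P.coeff d) hPS)
      simpa using h2
  intro p hp
  apply key (m + 1) le_rfl
  refine lt_of_le_of_lt degree_le_natDegree ?_
  exact_mod_cast Nat.lt_succ_of_le hp

open Polynomial in
noncomputable def phiMap (i : ℕ) : ℝ[X] →ₗ[ℝ] (faceTri → ℝ) where
  toFun q := fun p => p.val.1 ^ i * q.eval p.val.2
  map_add' a b := by funext p; simp [mul_add]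
  map_smul' c a := by funext p; simp; ring

open Polynomial in
lemma g_expand (i j : ℕ) (hi : 1 ≤ i) : ∃ A q : ℝ[X], A.coeff i ≠ 0 ∧ q ≠ 0 ∧ q.natDegree = j ∧
    restr (gFun i j) = phiMap i (C (A.coeff i) * q) +
      ∑ m ∈ Finset.range i, phiMap m (C (A.coeff m) * (1 - X) ^ (i - m) * q) := by
  obtain ⟨A, hA0, hAd, hA⟩ := jac_poly 0 i
  obtain ⟨Q, hQ0, hQd, hQ⟩ := jac_poly (2 * i + 1) j
  obtain ⟨k1, k2⟩ := comp_aff Q hQ0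
  refine ⟨A, _, ?_, k1, k2.trans hQd, ?_⟩
  · rw [← hAd]; exact leadingCoeff_ne_zero.mpr hA0
  funext ⟨⟨x, y⟩, hy0, hy1, hxy⟩
  simp only at hy0 hy1 hxy
  simp only [restr, gFun, phiMap, LinearMap.coe_mk, AddHom.coe_mk, Pi.add_apply, Finset.sum_apply,
    eval_mul, eval_C, eval_pow, eval_sub, eval_one, eval_X, eval_comp, eval_add]
  by_cases h : y = 1
  · subst h
    have hx : x = 0 := by simpa using hxy
    subst hx
    have hi0 : i ≠ 0 := by omega
    rw [Finset.sum_eq_zero]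
    · simp [hi0]
    · intro m hm
      have : i - m ≠ 0 := by have := Finset.mem_range.mp hm; omega
      simp [this]
  · have hne : 1 - y ≠ 0 := sub_ne_zero.mpr (Ne.symm h)
    have e1 := hA (x / (1 - y)) (Or.inr rfl)
    have e2 := hQ (2 * y - 1) (Or.inl (by intro h'; apply h; linarith))
    push_cast at e1 e2
    have e3 : 2 * y + -1 = 2 * y - 1 := by ring
    rw [e1, e2, e3, eval_eq_sum_range, hAd, Finset.sum_range_succ, add_mul, add_mul, Finset.sum_mul,
      Finset.sum_mul, add_comm]
    congr 1
    · rw [div_pow]; field_simp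
    · apply Finset.sum_congr rfl
      intro m hm
      have hm' := (Finset.mem_range.mp hm).le
      rw [div_pow, ← pow_sub_mul_pow (1 - y) hm']
      field_simp

open Polynomial in
lemma deg_term (a : ℝ) (q : ℝ[X]) (r j : ℕ) (hq : q.natDegree = j) :
    (C a * (1 - X) ^ r * q).natDegree ≤ r + j := by
  have h1 : (1 - X : ℝ[X]).natDegree ≤ 1 := by
    refine (natDegree_sub_le _ _).trans ?_
    simp
  have h2 : ((1 - X : ℝ[X]) ^ r).natDegree ≤ r := by
    refine natDegree_pow_le.trans ?_
    simpa using Nat.mul_le_mul_left r h1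
  refine natDegree_mul_le.trans ?_
  have := natDegree_C_mul_le a ((1 - X : ℝ[X]) ^ r)
  omega

def polySub (k : ℕ) : Submodule ℝ (faceTri → ℝ) where
  carrier := polyRestrictions k
  add_mem' := by
    rintro _ _ ⟨q, hq, rfl⟩ ⟨r, hr, rfl⟩
    refine ⟨q + r, (MvPolynomial.totalDegree_add q r).trans (max_le hq hr), ?_⟩
    funext p; simp [restr]
  zero_mem' := ⟨0, by simp, by funext p; simp [restr]⟩
  smul_mem' := by
    rintro c _ ⟨q, hq, rfl⟩
    refine ⟨c • q, (MvPolynomial.totalDegree_smul_le c q).trans hq, ?_⟩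
    funext p; simp [restr]

open Polynomial in
lemma phi_mem_poly (k i : ℕ) (q : ℝ[X]) (h : i + q.natDegree ≤ k) : phiMap i q ∈ polySub k := by
  rw [q.as_sum_range_C_mul_X_pow, map_sum]
  refine Submodule.sum_mem _ fun j hj => ?_
  have hj' : j ≤ q.natDegree := Nat.lt_succ_iff.mp (Finset.mem_range.mp hj)
  rw [← smul_eq_C_mul, map_smul]
  refine Submodule.smul_mem _ _ ⟨MvPolynomial.X 0 ^ i * MvPolynomial.X 1 ^ j, ?_, ?_⟩
  · refine (MvPolynomial.totalDegree_mul _ _).trans ?_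
    rw [MvPolynomial.totalDegree_X_pow, MvPolynomial.totalDegree_X_pow]; omega
  · funext p; simp [restr, phiMap]

/-- The normal-trace functions up to total order `k` span, as functions on `F`,
exactly the polynomials of total degree at most `k`. -/
theorem trace_span_eq_polynomials (k : ℕ) (hk : 1 ≤ k) :
    (Submodule.span ℝ (traceFamily k) : Set (faceTri → ℝ)) = polyRestrictions k := by
  apply Set.Subset.antisymm
  · change _ ⊆ ((polySub k : Submodule ℝ (faceTri → ℝ)) : Set (faceTri → ℝ))
    rw [SetLike.coe_subset_coe, Submodule.span_le]
    rintro f ((rfl | ⟨j, hj1, hjk, rfl⟩) | ⟨i, j, hi, hij, rfl⟩)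
    · exact ⟨1, by simp, by funext p; simp [restr]⟩
    · obtain ⟨H, _, hd, hH⟩ := h_poly j hj1
      have := phi_mem_poly k 0 H (by omega)
      have he : (restr fun p => hFun j p.2) = phiMap 0 H := by
        funext p
        simpa [restr, phiMap] using hH p.val.2 p.property.2.1
      rw [SetLike.mem_coe, he]
      exact this
    · obtain ⟨A, q, _, _, hq, he⟩ := g_expand i j hi
      rw [SetLike.mem_coe, he]
      refine Submodule.add_mem _ ?_ (Submodule.sum_mem _ fun m hm => ?_)
      · apply phi_mem_poly
        have := Polynomial.natDegree_C_mul_le (A.coeff i) q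
        omega
      · apply phi_mem_poly
        have := deg_term (A.coeff m) q (i - m) j hq
        have := Finset.mem_range.mp hm
        omega
  · set S := Submodule.span ℝ (traceFamily k) with hS
    have key : ∀ i, i ≤ k → ∀ q : Polynomial ℝ, i + q.natDegree ≤ k → phiMap i q ∈ S := by
      intro i
      induction i using Nat.strong_induction_on with
      | _ i ih =>
        intro hik q hq
        have := span_deg (S.comap (phiMap i)) (k - i) ?_ q (by omega)
        · exact this
        intro j hj
        rcases Nat.eq_zero_or_pos i with rfl | hi
        · rcases Nat.eq_zero_or_pos j with rfl | hj1
          · refine ⟨1, ?_, one_ne_zero, by simp⟩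
            rw [Submodule.mem_comap]
            apply Submodule.subset_span
            left; left
            rw [Set.mem_singleton_iff]
            funext p; simp [restr, phiMap]
          · obtain ⟨H, h0, hd, hH⟩ := h_poly j hj1
            refine ⟨H, ?_, h0, hd⟩
            rw [Submodule.mem_comap]
            apply Submodule.subset_span
            left; right
            refine ⟨j, hj1, by omega, ?_⟩
            funext p
            simpa [restr, phiMap] using (hH p.val.2 p.property.2.1).symm
        · obtain ⟨A, r, hA, hr0, hr, he⟩ := g_expand i j hi
          refine ⟨Polynomial.C (A.coeff i) * r, ?_,
            mul_ne_zero (by simpa using hA) hr0, by rw [Polynomial.natDegree_C_mul hA, hr]⟩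
          rw [Submodule.mem_comap]
          have hg : restr (gFun i j) ∈ S := by
            apply Submodule.subset_span
            right
            exact ⟨i, j, hi, by omega, rfl⟩
          rw [he] at hg
          refine (Submodule.add_mem_iff_left S (Submodule.sum_mem _ fun m hm => ?_)).mp hg
          have hm' := Finset.mem_range.mp hm
          apply ih m hm' (by omega)
          have := deg_term (A.coeff m) r (i - m) j hr
          omega
    rintro f ⟨q, hq, rfl⟩
    have : (restr fun p => MvPolynomial.eval ![p.1, p.2] q)
        = ∑ d ∈ q.support, (q.coeff d) • phiMap (d 0) (Polynomial.X ^ (d 1)) := by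
      funext p
      simp [restr, phiMap, MvPolynomial.eval_eq', Fin.prod_univ_two]
    rw [SetLike.mem_coe, this]
    refine Submodule.sum_mem _ fun d hd => Submodule.smul_mem _ _ ?_
    have hdeg := (MvPolynomial.le_totalDegree hd).trans hq
    rw [Finsupp.sum_fintype _ _ (by simp), Fin.sum_univ_two] at hdeg
    apply key
    · omega
    · simpa using hdeg
end
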